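/- Let θ > 0, t > 0 and f ∈ 𝒮. Then P_t f ∈ 𝒟(𝒜); that is: P_t f is C² on (0,∞), continuous on [0,∞) with lim_{x→∞} P_t f(x) = 0, the one-sided limits (P_t f)'(0⁺) and (P_t f)''(0⁺) exist and are finite, (P_t f)''(0⁺) = 2θ·(P_t f)'(0⁺), and lim_{x→∞} (P_t f)''(x) = 0. -/

import Mathlib

open MeasureTheory Real Filter Set

/-- Complementary error function `erfc(x) = (2/√π)·∫_x^∞ e^{−y²} dy`. -/
noncomputable def erfc (x : ℝ) : ℝ :=
  (2 / Real.sqrt Real.pi) * ∫ y in Set.Ioi x, Real.exp (-y ^ 2)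

/-- `g_t(x) = θ·exp(2θx + 2θ²t)·erfc(x/√(2t) + θ·√(2t))`. -/
noncomputable def gfun (θ t x : ℝ) : ℝ :=
  θ * Real.exp (2 * θ * x + 2 * θ ^ 2 * t) *
    erfc (x / Real.sqrt (2 * t) + θ * Real.sqrt (2 * t))

/-- The Gaussian kernel `p_t(x,y) = (2πt)^{−1/2}·exp(−(y−x)²/(2t))`. -/
noncomputable def pker (t x y : ℝ) : ℝ :=
  (Real.sqrt (2 * Real.pi * t))⁻¹ * Real.exp (-(y - x) ^ 2 / (2 * t))

/-- The sticky Brownian motion semigroup: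
`P_t f(x) = ∫_0^∞ (p_t(x,y) − p_t(x,−y) + 2 g_t(x+y)) f(y) dy + (1/θ) g_t(x) f(0)`. -/
noncomputable def Pt (θ t : ℝ) (f : ℝ → ℝ) (x : ℝ) : ℝ :=
  (∫ y in Set.Ioi (0:ℝ), (pker t x y - pker t x (-y) + 2 * gfun θ t (x + y)) * f y)
    + (1 / θ) * gfun θ t x * f 0

/-- `f ∈ 𝒮`: `f` is C² on `(0,∞)`, the one-sided limits `f(0⁺)`, `f'(0⁺)`, `f''(0⁺)` exist
and are finite, and `lim_{x→∞} f(x) = 0`. -/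
def memS (f : ℝ → ℝ) : Prop :=
  ContDiffOn ℝ 2 f (Set.Ioi 0) ∧
  (∃ a : ℝ, Filter.Tendsto f (nhdsWithin 0 (Set.Ioi 0)) (nhds a)) ∧
  (∃ b : ℝ, Filter.Tendsto (deriv f) (nhdsWithin 0 (Set.Ioi 0)) (nhds b)) ∧
  (∃ c : ℝ, Filter.Tendsto (deriv (deriv f)) (nhdsWithin 0 (Set.Ioi 0)) (nhds c)) ∧
  Filter.Tendsto f Filter.atTop (nhds 0)

def Nice (φ : ℝ → ℝ) : Prop := Continuous φ ∧ ∃ C, ∀ z, |φ z| ≤ C * Real.exp (-z)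

noncomputable def JJ (φ F : ℝ → ℝ) (ε x : ℝ) : ℝ := ∫ y in Set.Ioi (0:ℝ), φ (y + ε * x) * F y

lemma nice_C {φ : ℝ → ℝ} (h : Nice φ) : ∃ C, 0 ≤ C ∧ ∀ z, |φ z| ≤ C * Real.exp (-z) := by
  obtain ⟨C, hC⟩ := h.2
  refine ⟨C, ?_, hC⟩
  have := (abs_nonneg _).trans (hC 0)
  simpa using this

lemma nice_bd {φ F : ℝ → ℝ} {B C : ℝ} (hC0 : 0 ≤ C) (hC : ∀ z, |φ z| ≤ C * Real.exp (-z))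
    (hB : ∀ y, |F y| ≤ B) (ε x y m : ℝ) (hm : -(ε * x) ≤ m) :
    |φ (y + ε * x) * F y| ≤ C * Real.exp m * B * Real.exp (-y) := by
  have hB0 : 0 ≤ B := (abs_nonneg _).trans (hB 0)
  have h1 : |φ (y + ε * x)| ≤ C * (Real.exp m * Real.exp (-y)) := by
    refine (hC _).trans ?_
    rw [← Real.exp_add]
    gcongr
    linarith
  rw [abs_mul]
  calc _ ≤ C * (Real.exp m * Real.exp (-y)) * B := by
        gcongr
        exact hB y
    _ = _ := by ring

lemma meas_JJ {φ F : ℝ → ℝ} (hφ : Continuous φ) (hF : Measurable F) (ε x : ℝ) :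
    AEStronglyMeasurable (fun y => φ (y + ε * x) * F y) (volume.restrict (Set.Ioi (0:ℝ))) := by
  refine Measurable.aestronglyMeasurable ?_
  have : Measurable fun y => φ (y + ε * x) := (hφ.comp (by fun_prop)).measurable
  exact this.mul hF

lemma int_exp (K : ℝ) : Integrable (fun y => K * Real.exp (-y)) (volume.restrict (Set.Ioi (0:ℝ))) :=
  (integrableOn_exp_neg_Ioi 0).const_mul K

lemma int_JJ {φ F : ℝ → ℝ} {B : ℝ} (hφ : Nice φ) (hF : Measurable F) (hB : ∀ y, |F y| ≤ B)
    (ε x : ℝ) : Integrable (fun y => φ (y + ε * x) * F y) (volume.restrict (Set.Ioi (0:ℝ))) := by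
  obtain ⟨C, hC0, hC⟩ := nice_C hφ
  refine (int_exp (C * Real.exp (-(ε * x)) * B)).mono' (meas_JJ hφ.1 hF ε x) ?_
  refine Eventually.of_forall fun y => ?_
  exact nice_bd hC0 hC hB ε x y _ le_rfl

lemma loc_bd {ε x x₀ : ℝ} (hx : x ∈ Metric.ball x₀ 1) : -(ε * x) ≤ |ε| * (|x₀| + 1) := by
  have h1 : |x - x₀| < 1 := by simpa [Real.dist_eq] using hx
  have h2 : |x| ≤ |x₀| + 1 := by
    have := abs_add_le (x - x₀) x₀
    simp at this
    linarith
  calc -(ε * x) ≤ |ε * x| := neg_le_abs _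
    _ = |ε| * |x| := abs_mul _ _
    _ ≤ _ := by gcongr

lemma cont_JJ {φ F : ℝ → ℝ} {B : ℝ} (hφ : Nice φ) (hF : Measurable F) (hB : ∀ y, |F y| ≤ B)
    (ε : ℝ) : Continuous (JJ φ F ε) := by
  obtain ⟨C, hC0, hC⟩ := nice_C hφ
  rw [continuous_iff_continuousAt]
  intro x₀
  refine continuousAt_of_dominated (Eventually.of_forall fun x => meas_JJ hφ.1 hF ε x)
    (bound := fun y => C * Real.exp (|ε| * (|x₀| + 1)) * B * Real.exp (-y)) ?_ (int_exp _) ?_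
  · filter_upwards [Metric.ball_mem_nhds x₀ one_pos] with x hx
    exact Eventually.of_forall fun y => nice_bd hC0 hC hB ε x y _ (loc_bd hx)
  · refine Eventually.of_forall fun y => ?_
    have := hφ.1
    exact Continuous.continuousAt (by fun_prop)

lemma deriv_JJ {φ φ' F : ℝ → ℝ} {B : ℝ} (hφ : Nice φ) (hφ' : Nice φ')
    (hd : ∀ z, HasDerivAt φ (φ' z) z) (hF : Measurable F) (hB : ∀ y, |F y| ≤ B)
    (ε x₀ : ℝ) : HasDerivAt (JJ φ F ε) (ε * JJ φ' F ε x₀) x₀ := by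
  obtain ⟨C, hC0, hC⟩ := nice_C hφ'
  have key := hasDerivAt_integral_of_dominated_loc_of_deriv_le
    (μ := volume.restrict (Set.Ioi (0:ℝ)))
    (F := fun x y => φ (y + ε * x) * F y) (F' := fun x y => ε * (φ' (y + ε * x) * F y))
    (x₀ := x₀) (s := Metric.ball x₀ 1)
    (bound := fun y => |ε| * (C * Real.exp (|ε| * (|x₀| + 1)) * B * Real.exp (-y)))
    (Metric.ball_mem_nhds x₀ one_pos) (Eventually.of_forall fun x => meas_JJ hφ.1 hF ε x)
    (int_JJ hφ hF hB ε x₀) ((meas_JJ hφ'.1 hF ε x₀).const_mul ε) ?_ ((int_exp _).const_mul _) ?_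
  · have := key.2
    rw [integral_const_mul] at this
    exact this
  · refine Eventually.of_forall fun y x hx => ?_
    rw [Real.norm_eq_abs, abs_mul]
    gcongr
    exact nice_bd hC0 hC hB ε x y _ (loc_bd hx)
  · refine Eventually.of_forall fun y x hx => ?_
    have h1 : HasDerivAt (fun x => y + ε * x) ε x := by
      simpa using ((hasDerivAt_id x).const_mul ε).const_add y
    have := ((hd (y + ε * x)).comp x h1).mul_const (F y)
    refine HasDerivAt.congr_deriv this ?_
    ring

lemma lim_JJ_one {φ F : ℝ → ℝ} {B : ℝ} (hφ : Nice φ) (hB : ∀ y, |F y| ≤ B) :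
    Tendsto (JJ φ F 1) atTop (nhds 0) := by
  obtain ⟨C, hC0, hC⟩ := nice_C hφ
  have h0 : Tendsto (fun x : ℝ => C * Real.exp (-x) * B) atTop (nhds 0) := by
    simpa using (Real.tendsto_exp_neg_atTop_nhds_zero.const_mul C).mul_const B
  refine squeeze_zero_norm (fun x => ?_) h0
  have := norm_integral_le_of_norm_le (int_exp (C * Real.exp (-x) * B))
    (f := fun y => φ (y + 1 * x) * F y)
    (Eventually.of_forall fun y => nice_bd hC0 hC hB 1 x y _ (by simp))
  rw [integral_const_mul, integral_exp_neg_Ioi_zero, mul_one] at this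
  exact this

lemma lim_JJ_neg {φ F : ℝ → ℝ} {B : ℝ} (hφ : Integrable φ) (hF : Measurable F)
    (hB : ∀ y, |F y| ≤ B) (h0 : ∀ y ≤ 0, F y = 0) (hlim : Tendsto F atTop (nhds 0)) :
    Tendsto (JJ φ F (-1)) atTop (nhds 0) := by
  have e : JJ φ F (-1) = fun x => ∫ z, φ z * F (z + x) := by
    ext x
    unfold JJ
    rw [setIntegral_eq_integral_of_forall_compl_eq_zero]
    · rw [← integral_add_right_eq_self _ x]
      congr 1
      ext z
      congr 2
      ring
    · intro y hy
      rw [h0 y (by simpa using hy), mul_zero]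
  rw [e]
  have := tendsto_integral_filter_of_dominated_convergence (μ := volume) (l := atTop)
    (F := fun x z => φ z * F (z + x)) (f := fun _ => 0) (fun z => |φ z| * B) ?_ ?_
    (hφ.abs.mul_const B) ?_
  · simpa using this
  · refine Eventually.of_forall fun x => ?_
    exact hφ.1.mul (hF.comp (by fun_prop)).aestronglyMeasurable
  · refine Eventually.of_forall fun x => Eventually.of_forall fun z => ?_
    rw [Real.norm_eq_abs, abs_mul]
    gcongr
    exact hB _
  · refine Eventually.of_forall fun z => ?_
    have : Tendsto (fun x => F (z + x)) atTop (nhds 0) :=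
      hlim.comp (tendsto_atTop_add_const_left _ _ tendsto_id)
    simpa using this.const_mul (φ z)

lemma nice_lim {φ : ℝ → ℝ} (hφ : Nice φ) : Tendsto φ atTop (nhds 0) := by
  obtain ⟨C, hC⟩ := hφ.2
  refine squeeze_zero_norm hC ?_
  simpa using (Real.tendsto_exp_neg_atTop_nhds_zero.const_mul C)

lemma nice_add {φ ψ : ℝ → ℝ} (h : Nice φ) (k : Nice ψ) : Nice (fun z => φ z + ψ z) := by
  obtain ⟨C, hC⟩ := h.2
  obtain ⟨D, hD⟩ := k.2
  refine ⟨h.1.add k.1, C + D, fun z => (abs_add_le _ _).trans ?_⟩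
  rw [add_mul]
  exact add_le_add (hC z) (hD z)

lemma nice_smul {φ : ℝ → ℝ} (c : ℝ) (h : Nice φ) : Nice (fun z => c * φ z) := by
  obtain ⟨C, hC⟩ := h.2
  refine ⟨continuous_const.mul h.1, |c| * C, fun z => ?_⟩
  rw [abs_mul, mul_assoc]
  gcongr
  exact hC z

lemma bdd_f {f : ℝ → ℝ} {a : ℝ} (hc : ContinuousOn f (Ioi 0))
    (h0 : Tendsto f (nhdsWithin 0 (Ioi 0)) (nhds a)) (hi : Tendsto f atTop (nhds 0)) :
    ∃ B, 0 ≤ B ∧ ∀ y, 0 < y → |f y| ≤ B := by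
  have e1 : ∀ᶠ y in nhdsWithin 0 (Ioi 0), |f y| < |a| + 1 :=
    h0.abs.eventually (gt_mem_nhds (by linarith))
  have e2 : ∀ᶠ y in atTop, |f y| < 1 := hi.abs.eventually (gt_mem_nhds (by simp))
  obtain ⟨d, hd, hd'⟩ := mem_nhdsGT_iff_exists_Ioo_subset.1 e1
  obtain ⟨R, hR⟩ := eventually_atTop.1 e2
  obtain ⟨K, hK⟩ := isCompact_Icc.exists_bound_of_continuousOn (s := Icc d R)
    (hc.mono fun y hy => lt_of_lt_of_le hd hy.1)
  refine ⟨|a| + 1 + |K|, by positivity, fun y hy => ?_⟩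
  have ha := abs_nonneg a
  have hk := abs_nonneg K
  rcases lt_or_ge y d with h | h
  · have := hd' ⟨hy, h⟩
    simp only [mem_ofPred_eq] at this
    linarith
  · rcases le_or_gt y R with h' | h'
    · have := hK y ⟨h, h'⟩
      rw [Real.norm_eq_abs] at this
      have := le_abs_self K
      linarith
    · have := hR y h'.le
      linarith

noncomputable def pp (t z : ℝ) : ℝ := (Real.sqrt (2 * Real.pi * t))⁻¹ * Real.exp (-z ^ 2 / (2 * t))
noncomputable def pp1 (t z : ℝ) : ℝ := (-t⁻¹) * (z * pp t z)
noncomputable def pp2 (t z : ℝ) : ℝ := (-t⁻¹) * pp t z + (t⁻¹ ^ 2) * (z ^ 2 * pp t z)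

lemma pp_nonneg (t z : ℝ) : 0 ≤ pp t z := by unfold pp; positivity

lemma pp_cont (t : ℝ) : Continuous (pp t) := by unfold pp; fun_prop

lemma pp_d {t : ℝ} (ht : 0 < t) (z : ℝ) : HasDerivAt (pp t) (pp1 t z) z := by
  have h1 : HasDerivAt (fun z : ℝ => -z ^ 2 / (2 * t)) (-(2 * z) / (2 * t)) z := by
    simpa using ((hasDerivAt_pow 2 z).neg).div_const (2 * t)
  have := h1.exp.const_mul (Real.sqrt (2 * Real.pi * t))⁻¹
  refine HasDerivAt.congr_deriv this ?_
  unfold pp1 pp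
  field_simp

lemma pp1_d {t : ℝ} (ht : 0 < t) (z : ℝ) : HasDerivAt (pp1 t) (pp2 t z) z := by
  have := ((hasDerivAt_id z).mul (pp_d ht z)).const_mul (-t⁻¹)
  refine HasDerivAt.congr_deriv this ?_
  simp only [pp1, pp2, id]
  ring

lemma pp_bd {t : ℝ} (ht : 0 < t) (k z : ℝ) :
    pp t z ≤ (Real.sqrt (2 * Real.pi * t))⁻¹ * Real.exp (k ^ 2 * t / 2) * Real.exp (-(k * z)) := by
  unfold pp
  rw [mul_assoc (Real.sqrt _)⁻¹, ← Real.exp_add]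
  gcongr
  rw [div_le_iff₀ (by positivity)]
  nlinarith [sq_nonneg (z - k * t)]

lemma nice_poly {t : ℝ} (ht : 0 < t) (q : ℝ → ℝ) (hq : Continuous q) (D : ℝ) (hD : 0 ≤ D)
    (h : ∀ z, |q z| ≤ D * Real.exp |z|) : Nice (fun z => q z * pp t z) := by
  refine ⟨hq.mul (pp_cont t), ?_⟩
  set c := (Real.sqrt (2 * Real.pi * t))⁻¹
  refine ⟨D * (c * Real.exp (2 ^ 2 * t / 2) + c * Real.exp (0 ^ 2 * t / 2)), fun z => ?_⟩
  have e : Real.exp |z| ≤ Real.exp z + Real.exp (-z) := by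
    rcases abs_cases z with h | h <;> rw [h.1] <;> linarith [Real.exp_pos z, Real.exp_pos (-z)]
  have b2 := mul_le_mul_of_nonneg_left (pp_bd ht 2 z) (Real.exp_pos z).le
  have b0 := mul_le_mul_of_nonneg_left (pp_bd ht 0 z) (Real.exp_pos (-z)).le
  have e2 : Real.exp z * Real.exp (-(2 * z)) = Real.exp (-z) := by
    rw [← Real.exp_add]; ring_nf
  have e0 : Real.exp (-(0 * z)) = 1 := by simp
  rw [abs_mul, abs_of_nonneg (pp_nonneg t z)]
  calc |q z| * pp t z ≤ D * (Real.exp z + Real.exp (-z)) * pp t z := by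
        have := pp_nonneg t z
        gcongr
        exact (h z).trans (by gcongr)
    _ = D * (Real.exp z * pp t z + Real.exp (-z) * pp t z) := by ring
    _ ≤ D * (Real.exp z * (c * Real.exp (2 ^ 2 * t / 2) * Real.exp (-(2 * z)))
        + Real.exp (-z) * (c * Real.exp (0 ^ 2 * t / 2) * Real.exp (-(0 * z)))) := by gcongr
    _ = D * (c * Real.exp (2 ^ 2 * t / 2) * (Real.exp z * Real.exp (-(2 * z)))
        + Real.exp (-z) * (c * Real.exp (0 ^ 2 * t / 2) * Real.exp (-(0 * z)))) := by ring
    _ = _ := by rw [e2, e0]; ring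

lemma nice_pp {t : ℝ} (ht : 0 < t) : Nice (pp t) := by
  simpa using nice_poly ht (fun _ => 1) continuous_const 1 zero_le_one (fun z => by simp)

lemma nice_pp1 {t : ℝ} (ht : 0 < t) : Nice (pp1 t) :=
  nice_smul _ (nice_poly ht (fun z => z) continuous_id 1 zero_le_one
    (fun z => by linarith [Real.add_one_le_exp |z|]))

lemma nice_pp2 {t : ℝ} (ht : 0 < t) : Nice (pp2 t) :=
  nice_add (nice_smul _ (nice_pp ht)) (nice_smul _ (nice_poly ht (fun z => z ^ 2) (by fun_prop) 2
    zero_le_two (fun z => by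
      have := Real.quadratic_le_exp_of_nonneg (abs_nonneg z)
      rw [sq_abs] at this
      rw [abs_of_nonneg (sq_nonneg z)]
      nlinarith [abs_nonneg z])))

lemma int_pp {t : ℝ} (ht : 0 < t) : Integrable (pp t) := by
  have := (integrable_exp_neg_mul_sq (b := (2 * t)⁻¹) (by positivity)).const_mul
    (Real.sqrt (2 * Real.pi * t))⁻¹
  refine this.congr (Eventually.of_forall fun z => ?_)
  simp only [pp]
  congr 2
  field_simp

lemma int_pp2 {t : ℝ} (ht : 0 < t) : Integrable (pp2 t) := by
  have := (integrable_rpow_mul_exp_neg_mul_sq (b := (2 * t)⁻¹) (by positivity) (s := 2)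
    (by norm_num)).const_mul (Real.sqrt (2 * Real.pi * t))⁻¹
  refine ((int_pp ht).const_mul _).add (Integrable.const_mul ?_ _)
  refine this.congr (Eventually.of_forall fun z => ?_)
  simp only [pp, Real.rpow_two]
  rw [mul_left_comm]
  congr 3
  field_simp

lemma int_gauss : Integrable (fun y : ℝ => Real.exp (-y ^ 2)) := by
  simpa using integrable_exp_neg_mul_sq (b := 1) one_pos

lemma erfc_d (x : ℝ) : HasDerivAt erfc (-(2 / Real.sqrt Real.pi * Real.exp (-x ^ 2))) x := by
  have e : erfc = fun x => 2 / Real.sqrt Real.pi *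
      ((∫ y in Set.Ioi (0:ℝ), Real.exp (-y ^ 2)) - ∫ y in (0:ℝ)..x, Real.exp (-y ^ 2)) := by
    ext x
    unfold erfc
    rw [intervalIntegral.integral_Ioi_sub_Ioi' int_gauss.integrableOn int_gauss.integrableOn |>.symm]
    ring
  rw [e]
  have hc : Continuous fun y : ℝ => Real.exp (-y ^ 2) := by fun_prop
  have := ((hc.integral_hasStrictDerivAt 0 x).hasDerivAt.const_sub
    (∫ y in Set.Ioi (0:ℝ), Real.exp (-y ^ 2))).const_mul (2 / Real.sqrt Real.pi)
  refine HasDerivAt.congr_deriv this ?_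
  ring

lemma erfc_nonneg (x : ℝ) : 0 ≤ erfc x := by
  unfold erfc
  have : 0 ≤ ∫ y in Set.Ioi x, Real.exp (-y ^ 2) := integral_nonneg fun y => (Real.exp_pos _).le
  positivity

lemma erfc_bd {k : ℝ} (hk : 0 < k) (x : ℝ) :
    erfc x ≤ 2 / Real.sqrt Real.pi * (Real.exp (k ^ 2) / k) * Real.exp (-(k * x)) := by
  unfold erfc
  rw [mul_assoc]
  gcongr
  have h1 : ∫ y in Set.Ioi x, Real.exp (-y ^ 2) ≤
      ∫ y in Set.Ioi x, Real.exp (k ^ 2) * Real.exp (-k * y) := by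
    refine setIntegral_mono int_gauss.integrableOn
      ((integrableOn_exp_mul_Ioi (by linarith) x).const_mul _) fun y => ?_
    rw [← Real.exp_add]
    gcongr
    nlinarith [sq_nonneg (2 * y - k), sq_nonneg k]
  refine h1.trans_eq ?_
  rw [integral_const_mul, integral_exp_mul_Ioi (by linarith) x]
  rw [neg_mul, neg_div_neg_eq]
  ring

lemma gfun_d {θ t : ℝ} (ht : 0 < t) (z : ℝ) :
    HasDerivAt (gfun θ t) (2 * θ * (gfun θ t z + (-1) * pp t z)) z := by
  have hs : 0 < Real.sqrt (2 * t) := by positivity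
  have hsq : Real.sqrt (2 * t) ^ 2 = 2 * t := Real.sq_sqrt (by positivity)
  have h1 : HasDerivAt (fun x => 2 * θ * x + 2 * θ ^ 2 * t) (2 * θ) z := by
    simpa using ((hasDerivAt_id z).const_mul (2 * θ)).add_const (2 * θ ^ 2 * t)
  have h2 : HasDerivAt (fun x => x / Real.sqrt (2 * t) + θ * Real.sqrt (2 * t))
      (1 / Real.sqrt (2 * t)) z := by
    simpa using ((hasDerivAt_id z).div_const (Real.sqrt (2 * t))).add_const
      (θ * Real.sqrt (2 * t))
  have := (h1.exp.const_mul θ).mul ((erfc_d _).comp z h2)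
  refine HasDerivAt.congr_deriv this ?_
  have e1 : Real.exp (2 * θ * z + 2 * θ ^ 2 * t) *
      Real.exp (-(z / Real.sqrt (2 * t) + θ * Real.sqrt (2 * t)) ^ 2)
      = Real.exp (-z ^ 2 / (2 * t)) := by
    rw [← Real.exp_add]
    congr 1
    have : (z / Real.sqrt (2 * t) + θ * Real.sqrt (2 * t)) ^ 2
        = z ^ 2 / (2 * t) + 2 * θ * z + θ ^ 2 * (2 * t) := by
      rw [add_sq, div_pow, mul_pow, hsq]
      field_simp
    rw [this]
    ring
  have e2 : Real.sqrt (2 * Real.pi * t) = Real.sqrt Real.pi * Real.sqrt (2 * t) := by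
    rw [← Real.sqrt_mul Real.pi_pos.le]; ring_nf
  have hp : 0 < Real.sqrt Real.pi := by positivity
  unfold pp
  rw [← e1, e2]
  unfold gfun
  simp only [Function.comp]
  field_simp

lemma nice_g {θ t : ℝ} (hθ : 0 < θ) (ht : 0 < t) : Nice (gfun θ t) := by
  refine ⟨continuous_iff_continuousAt.2 fun z => (gfun_d ht z).continuousAt, ?_⟩
  have hs : 0 < Real.sqrt (2 * t) := by positivity
  set s := Real.sqrt (2 * t)
  set k := (2 * θ + 1) * s
  have hk : 0 < k := by positivity
  refine ⟨θ * (2 / Real.sqrt Real.pi * (Real.exp (k ^ 2) / k)) *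
    Real.exp (2 * θ ^ 2 * t - k * (θ * s)), fun z => ?_⟩
  have h0 := erfc_nonneg (z / s + θ * s)
  have : 0 ≤ gfun θ t z := by unfold gfun; positivity
  rw [abs_of_nonneg this]
  unfold gfun
  calc _ ≤ θ * Real.exp (2 * θ * z + 2 * θ ^ 2 * t) *
        (2 / Real.sqrt Real.pi * (Real.exp (k ^ 2) / k) * Real.exp (-(k * (z / s + θ * s)))) := by
        gcongr
        exact erfc_bd hk _
    _ = θ * (2 / Real.sqrt Real.pi * (Real.exp (k ^ 2) / k)) *
        (Real.exp (2 * θ * z + 2 * θ ^ 2 * t) * Real.exp (-(k * (z / s + θ * s)))) := by ring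
    _ = _ := by
        rw [mul_assoc _ (Real.exp (2 * θ ^ 2 * t - k * (θ * s))), ← Real.exp_add, ← Real.exp_add]
        congr 2
        have : k * (z / s) = (2 * θ + 1) * z := by
          simp only [k]; field_simp
        rw [mul_add, this]
        ring

theorem Pt_mem_DA (θ t : ℝ) (hθ : 0 < θ) (ht : 0 < t)
    (f : ℝ → ℝ) (hf : memS f) :
    ContDiffOn ℝ 2 (Pt θ t f) (Set.Ioi 0) ∧
    ContinuousOn (Pt θ t f) (Set.Ici 0) ∧
    Filter.Tendsto (Pt θ t f) Filter.atTop (nhds 0) ∧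
    (∃ L M : ℝ,
      Filter.Tendsto (deriv (Pt θ t f)) (nhdsWithin 0 (Set.Ioi 0)) (nhds L) ∧
      Filter.Tendsto (deriv (deriv (Pt θ t f))) (nhdsWithin 0 (Set.Ioi 0)) (nhds M) ∧
      M = 2 * θ * L) ∧
    Filter.Tendsto (deriv (deriv (Pt θ t f))) Filter.atTop (nhds 0) := by
  obtain ⟨hcd, ⟨a, ha⟩, -, -, hinf⟩ := hf
  obtain ⟨B, hB0, hB'⟩ := bdd_f hcd.continuousOn ha hinf
  obtain ⟨F, hF⟩ : ∃ F, F = (Ioi (0:ℝ)).indicator f := ⟨_, rfl⟩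
  have hFf : ∀ y, 0 < y → F y = f y := fun y hy => by
    rw [hF, indicator_of_mem (show y ∈ Ioi (0:ℝ) from hy)]
  have hF0 : ∀ y ≤ 0, F y = 0 := fun y hy => by
    rw [hF, indicator_of_notMem (by simpa using hy)]
  have hB : ∀ y, |F y| ≤ B := fun y => by
    rcases lt_or_ge 0 y with h | h
    · rw [hFf y h]; exact hB' y h
    · rw [hF0 y h]; simpa using hB0
  have hFm : Measurable F := by
    rw [hF, ← piecewise_eq_indicator]
    exact hcd.continuousOn.measurable_piecewise continuousOn_const measurableSet_Ioi
  have hFl : Tendsto F atTop (nhds 0) :=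
    hinf.congr' ((eventually_gt_atTop 0).mono fun y hy => (hFf y hy).symm)
  have np := nice_pp ht
  have np1 := nice_pp1 ht
  have np2 := nice_pp2 ht
  have ng := nice_g hθ ht
  have ng1 : Nice (fun z => gfun θ t z + (-1) * pp t z) := nice_add ng (nice_smul _ np)
  have ng2 : Nice (fun z => 2 * θ * (gfun θ t z + (-1) * pp t z) + (-1) * pp1 t z) :=
    nice_add (nice_smul _ ng1) (nice_smul _ np1)
  set g := gfun θ t with hg
  obtain ⟨g1, hg1⟩ : ∃ g1, g1 = (fun z => g z + (-1) * pp t z) := ⟨_, rfl⟩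
  obtain ⟨g2, hg2⟩ : ∃ g2, g2 = (fun z => 2 * θ * g1 z + (-1) * pp1 t z) := ⟨_, rfl⟩
  have dg : ∀ z, HasDerivAt g (2 * θ * g1 z) z := fun z => by rw [hg1]; exact gfun_d ht z
  have dg1 : ∀ z, HasDerivAt g1 (g2 z) z := fun z => by
    have := (dg z).add ((pp_d ht z).const_mul (-1))
    exact (this.congr_of_eventuallyEq (Eventually.of_forall fun z => by rw [hg1]; rfl)).congr_deriv
      (by rw [hg2])
  have ng1 : Nice g1 := by rw [hg1]; exact ng1
  have ng2 : Nice g2 := by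
    rw [hg2, hg1]; exact ng2
  have hP : Pt θ t f = fun x => JJ (pp t) F (-1) x - JJ (pp t) F 1 x + 2 * JJ g F 1 x
      + (1 / θ) * g x * f 0 := by
    ext x
    unfold Pt JJ
    rw [← integral_const_mul, ← integral_sub (int_JJ np hFm hB _ _) (int_JJ np hFm hB _ _),
      ← integral_add (f := fun a => pp t (a + -1 * x) * F a - pp t (a + 1 * x) * F a)
        ((int_JJ np hFm hB _ _).sub (int_JJ np hFm hB _ _)) ((int_JJ ng hFm hB _ _).const_mul _)]
    congr 1
    refine setIntegral_congr_fun measurableSet_Ioi fun y hy => ?_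
    have e1 : pker t x y = pp t (y + -1 * x) := by
      unfold pker pp; ring_nf
    have e2 : pker t x (-y) = pp t (y + 1 * x) := by
      unfold pker pp; ring_nf
    rw [hFf y hy, e1, e2, one_mul, add_comm x y]
    ring
  have dP : ∀ x, HasDerivAt (Pt θ t f) (-JJ (pp1 t) F (-1) x - JJ (pp1 t) F 1 x
      + 4 * θ * JJ g1 F 1 x + 2 * f 0 * g1 x) x := fun x => by
    rw [hP]
    have n3 : Nice (fun z => 2 * θ * g1 z) := nice_smul _ ng1
    have e3 : JJ (fun z => 2 * θ * g1 z) F 1 x = 2 * θ * JJ g1 F 1 x := by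
      unfold JJ
      rw [← integral_const_mul]
      congr 1; ext y; ring
    have := (((deriv_JJ np np1 (pp_d ht) hFm hB (-1) x).sub
      (deriv_JJ np np1 (pp_d ht) hFm hB 1 x)).add
      ((deriv_JJ ng n3 dg hFm hB 1 x).const_mul 2)).add (((dg x).const_mul (1 / θ)).mul_const (f 0))
    refine HasDerivAt.congr_deriv this ?_
    rw [e3]
    field_simp
    ring
  have hP1 : deriv (Pt θ t f) = fun x => -JJ (pp1 t) F (-1) x - JJ (pp1 t) F 1 x
      + 4 * θ * JJ g1 F 1 x + 2 * f 0 * g1 x := funext fun x => (dP x).deriv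
  have dP1 : ∀ x, HasDerivAt (deriv (Pt θ t f)) (JJ (pp2 t) F (-1) x - JJ (pp2 t) F 1 x
      + 4 * θ * JJ g2 F 1 x + 2 * f 0 * g2 x) x := fun x => by
    rw [hP1]
    have := (((deriv_JJ np1 np2 (pp1_d ht) hFm hB (-1) x).neg.sub
      (deriv_JJ np1 np2 (pp1_d ht) hFm hB 1 x)).add
      ((deriv_JJ ng1 ng2 dg1 hFm hB 1 x).const_mul (4 * θ))).add ((dg1 x).const_mul (2 * f 0))
    refine HasDerivAt.congr_deriv this ?_
    ring
  have hP2 : deriv (deriv (Pt θ t f)) = fun x => JJ (pp2 t) F (-1) x - JJ (pp2 t) F 1 x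
      + 4 * θ * JJ g2 F 1 x + 2 * f 0 * g2 x := funext fun x => (dP1 x).deriv
  have c1 : Continuous (deriv (Pt θ t f)) :=
    continuous_iff_continuousAt.2 fun x => (dP1 x).continuousAt
  have c2 : Continuous (deriv (deriv (Pt θ t f))) := by
    rw [hP2]
    exact (((cont_JJ np2 hFm hB _).sub (cont_JJ np2 hFm hB _)).add
      (continuous_const.mul (cont_JJ ng2 hFm hB _))).add (continuous_const.mul ng2.1)
  have hC2 : ContDiff ℝ 2 (Pt θ t f) := by
    rw [show (2 : WithTop ℕ∞) = 1 + 1 by norm_num, contDiff_succ_iff_deriv]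
    refine ⟨fun x => (dP x).differentiableAt, by simp, ?_⟩
    rw [contDiff_one_iff_deriv]
    exact ⟨fun x => (dP1 x).differentiableAt, c2⟩
  refine ⟨hC2.contDiffOn, hC2.continuous.continuousOn, ?_, ⟨deriv (Pt θ t f) 0,
    deriv (deriv (Pt θ t f)) 0, (c1.tendsto 0).mono_left nhdsWithin_le_nhds,
    (c2.tendsto 0).mono_left nhdsWithin_le_nhds, ?_⟩, ?_⟩
  · rw [hP]
    simpa using (((lim_JJ_neg (int_pp ht) hFm hB hF0 hFl).sub (lim_JJ_one np hB)).add
      ((lim_JJ_one ng hB).const_mul 2)).add (((nice_lim ng).const_mul (1 / θ)).mul_const (f 0))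
  · rw [hP2, hP1]
    have z : ∀ φ ε, JJ φ F ε 0 = ∫ y in Ioi (0:ℝ), φ y * F y := fun φ ε => by simp [JJ]
    have i1 := int_JJ ng1 hFm hB 1 0
    have i2 := int_JJ np1 hFm hB 1 0
    simp only [mul_zero, add_zero] at i1 i2
    have e : ∫ y in Ioi (0:ℝ), g2 y * F y = 2 * θ * (∫ y in Ioi (0:ℝ), g1 y * F y)
        - ∫ y in Ioi (0:ℝ), pp1 t y * F y := by
      rw [← integral_const_mul, ← integral_sub (i1.const_mul _) i2]
      congr 1; ext y; rw [hg2]; ring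
    have e0 : g2 0 = 2 * θ * g1 0 := by rw [hg2]; simp [pp1]
    simp only [z, e, e0]
    ring
  · rw [hP2]
    simpa using (((lim_JJ_neg (int_pp2 ht) hFm hB hF0 hFl).sub (lim_JJ_one np2 hB)).add
      ((lim_JJ_one ng2 hB).const_mul (4 * θ))).add ((nice_lim ng2).const_mul (2 * f 0))
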